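/- arXiv:1710.01936 — 2 statements merged into one kernel-verified Lean document; each statement's English description precedes it below -/
import Mathlib

section
/- For every prime p ≥ 3, every k ≥ 2 with k ≢ 1 (mod p), and every a ∈ [0,p], there exists t ∈ Z_p such that the minimum of s_k(A) over a-element subsets A ⊆ Z_p equals s_k({t, t+1, ..., t+a-1}). -/
/-- `skcount k A` is the number of `(k+1)`-tuples of elements of `A`
with `x 0 = x 1 + ... + x k`. -/
def skcount {p : ℕ} (k : ℕ) (A : Finset (ZMod p)) : ℕ :=
  ((Fintype.piFinset (fun _ : Fin (k + 1) => A)).filter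
    (fun x => x 0 = ∑ i : Fin k, x i.succ)).card

/-- The interval `{t, t+1, ..., t+a-1}` in `ZMod p`. -/
def interval {p : ℕ} (t : ZMod p) (a : ℕ) : Finset (ZMod p) :=
  (Finset.range a).image (fun j : ℕ => t + (j : ZMod p))

/-- The `0`-`1` valued indicator function of a finite set. -/
def ind {G : Type*} [DecidableEq G] (A : Finset G) (x : G) : ℕ := if x ∈ A then 1 else 0

/-- The convolution of a function with the indicator function of a finite set. -/
def setConv {G : Type*} [AddCommGroup G] (f : G → ℕ) (A : Finset G) (z : G) : ℕ :=
  ∑ x ∈ A, f (z - x)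

section Indicator

variable {G : Type*} [DecidableEq G]

theorem sum_ind [Fintype G] (A : Finset G) : ∑ z, ind A z = A.card := by
  simp [ind]

theorem sum_mul_ind [Fintype G] (f : G → ℕ) (A : Finset G) :
    ∑ z, f z * ind A z = ∑ z ∈ A, f z := by
  simp [ind]

theorem ind_mono {A B : Finset G} (h : A ⊆ B) (x : G) : ind A x ≤ ind B x := by
  unfold ind
  by_cases hx : x ∈ A
  · simp [hx, h hx]
  · simp [hx]

end Indicator

section Group

variable {G : Type*} [AddCommGroup G]

theorem sum_setConv [Fintype G] (f : G → ℕ) (A : Finset G) :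
    ∑ z, setConv f A z = A.card * ∑ z, f z := by
  unfold setConv
  rw [Finset.sum_comm, ← smul_eq_mul, ← Finset.sum_const]
  exact Finset.sum_congr rfl fun x _ => Equiv.sum_comp (Equiv.subRight x) f

theorem setConv_comp_add_right (f : G → ℕ) (A : Finset G) (s z : G) :
    setConv (fun x => f (x + s)) A z = setConv f A (z + s) :=
  Finset.sum_congr rfl fun x _ => congrArg f (sub_add_eq_add_sub z x s)

theorem setConv_mono_left {f g : G → ℕ} (h : ∀ x, f x ≤ g x) (A : Finset G) (z : G) :
    setConv f A z ≤ setConv g A z :=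
  Finset.sum_le_sum fun _ _ => h _

variable [DecidableEq G]

theorem setConv_ind_le (A B : Finset G) (z : G) : setConv (ind A) B z ≤ B.card := by
  rw [Finset.card_eq_sum_ones]
  exact Finset.sum_le_sum fun x _ => by unfold ind; split_ifs <;> simp

theorem setConv_ind_comm (A B : Finset G) (z : G) : setConv (ind A) B z = setConv (ind B) A z := by
  unfold setConv ind
  rw [← Finset.card_filter, ← Finset.card_filter]
  refine Finset.card_nbij' (fun x => z - x) (fun x => z - x) ?_ ?_ ?_ ?_ <;>
    intro x <;> simp +contextual

theorem setConv_image_add_right (f : G → ℕ) (A : Finset G) (d z : G) :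
    setConv f (A.image (· + d)) z = setConv f A (z - d) := by
  unfold setConv
  rw [Finset.sum_image fun x _ y _ h => add_right_cancel h]
  exact Finset.sum_congr rfl fun x _ => by rw [sub_sub, add_comm d]

/-- The Dyson transform splits the representation function of a pair of sets. -/
theorem setConv_ind_eq_union_inter_add_sdiff (A B : Finset G) (z : G) :
    setConv (ind A) B z = setConv (ind (A ∪ B)) (A ∩ B) z + setConv (ind (A \ B)) (B \ A) z := by
  have h1 : setConv (ind A) B z = setConv (ind A) (A ∩ B) z + setConv (ind A) (B \ A) z := by
    unfold setConv
    rw [Finset.inter_comm, add_comm, ← Finset.sum_sdiff (Finset.inter_subset_left : B ∩ A ⊆ B),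
      Finset.sdiff_inter_self_left]
  have h2 : setConv (ind (A ∪ B)) (A ∩ B) z
      = setConv (ind A) (A ∩ B) z + setConv (ind (B \ A)) (A ∩ B) z := by
    unfold setConv
    rw [← Finset.sum_add_distrib]
    refine Finset.sum_congr rfl fun x _ => ?_
    by_cases ha : z - x ∈ A <;> by_cases hb : z - x ∈ B <;> simp [ind, ha, hb]
  have h3 : setConv (ind A) (B \ A) z
      = setConv (ind (A ∩ B)) (B \ A) z + setConv (ind (A \ B)) (B \ A) z := by
    unfold setConv
    rw [← Finset.sum_add_distrib]
    refine Finset.sum_congr rfl fun x _ => ?_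
    by_cases ha : z - x ∈ A <;> by_cases hb : z - x ∈ B <;> simp [ind, ha, hb]
  rw [h1, h2, h3, setConv_ind_comm (B \ A)]
  ring

end Group

section Pollard

variable {p : ℕ} [Fact p.Prime]

theorem eq_univ_of_add_mem {A : Finset (ZMod p)} (hA : A.Nonempty) {d : ZMod p} (hd : d ≠ 0)
    (h : ∀ x ∈ A, x + d ∈ A) : A = Finset.univ := by
  obtain ⟨a, ha⟩ := hA
  have key : ∀ n : ℕ, a + n * d ∈ A := by
    intro n
    induction n with
    | zero => simpa using ha
    | succ n ih =>
      have := h _ ih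
      push_cast
      rwa [add_mul, one_mul, ← add_assoc]
  refine Finset.eq_univ_of_forall fun x => ?_
  have := key ((x - a) / d).val
  rw [ZMod.natCast_zmod_val, div_mul_cancel₀ _ hd] at this
  simpa using this

theorem exists_translate_inter_nonempty_not_subset {A B : Finset (ZMod p)} (hA : A.Nonempty)
    (hA' : A ≠ Finset.univ) (hB : 1 < B.card) :
    ∃ d, (A ∩ B.image (· + d)).Nonempty ∧ ¬ B.image (· + d) ⊆ A := by
  by_contra! hcon
  obtain ⟨b, hb, c, hc, hbc⟩ := Finset.one_lt_card.mp hB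
  refine hA' (eq_univ_of_add_mem hA (sub_ne_zero.mpr hbc.symm) fun x hx => ?_)
  refine hcon (x - b) ⟨x, ?_⟩ ?_
  · simp only [Finset.mem_inter, Finset.mem_image]
    exact ⟨hx, b, hb, by ring⟩
  · exact Finset.mem_image.mpr ⟨c, hc, by ring⟩

/-- **Pollard's theorem**. -/
theorem pollard (A B : Finset (ZMod p)) (t : ℕ) (htA : t ≤ A.card) (htB : t ≤ B.card) :
    t * min p (A.card + B.card - t) ≤ ∑ z, min t (setConv (ind A) B z) := by
  induction hn : B.card using Nat.strong_induction_on generalizing A B t with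
  | _ n ih =>
  subst hn
  wlog hp : A.card + B.card - t ≤ p generalizing A
  · have hBp : B.card ≤ p := (Finset.card_le_univ B).trans_eq (ZMod.card p)
    obtain ⟨A', hA', hcard⟩ :=
      Finset.exists_subset_card_eq (show p + t - B.card ≤ A.card by omega)
    have := this A' (by omega) (by omega)
    rw [hcard, show p + t - B.card + B.card - t = p by omega, min_self] at this
    refine (Nat.mul_le_mul_left t (min_le_left _ _)).trans (this.trans ?_)
    exact Finset.sum_le_sum fun z _ =>
      min_le_min_left _ (setConv_mono_left (ind_mono hA') B z)
  rw [min_eq_right hp]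
  rcases Nat.eq_zero_or_pos t with rfl | ht
  · simp
  rcases htB.eq_or_lt with h | htB'
  · rw [Finset.sum_congr rfl fun z _ => min_eq_right (h ▸ setConv_ind_le A B z), sum_setConv,
      sum_ind, h, Nat.add_sub_cancel]
  have hA : A.Nonempty := Finset.card_pos.mp (by omega)
  have hAu : A ≠ Finset.univ := by
    rintro rfl
    rw [Finset.card_univ, ZMod.card] at hp
    omega
  obtain ⟨d, hne, hsub⟩ := exists_translate_inter_nonempty_not_subset hA hAu (by omega : 1 < B.card)
  set C := B.image (· + d) with hC
  have hCB : C.card = B.card := Finset.card_image_of_injective _ (add_left_injective d)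
  have hsum : ∑ z, min t (setConv (ind A) B z) = ∑ z, min t (setConv (ind A) C z) := by
    rw [← Equiv.sum_comp (Equiv.subRight d)]
    exact Finset.sum_congr rfl fun z _ => by rw [hC, setConv_image_add_right]; rfl
  have hi : 0 < (A ∩ C).card := Finset.card_pos.mpr hne
  have hi' : (A ∩ C).card < C.card := Finset.card_lt_card
    ⟨Finset.inter_subset_right, fun h => hsub (h.trans Finset.inter_subset_left)⟩
  have hU := Finset.card_union_add_card_inter A C
  have hdA := Finset.card_sdiff_add_card_inter A C
  have hdC := Finset.card_sdiff_add_card_inter C A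
  rw [Finset.inter_comm] at hdC
  rw [hsum]
  rcases le_or_gt t (A ∩ C).card with hti | hti
  · have := ih (A ∩ C).card (by omega) (A ∪ C) (A ∩ C) t (by omega) hti rfl
    rw [hU, hCB, min_eq_right hp] at this
    refine this.trans (Finset.sum_le_sum fun z _ => min_le_min_left _ ?_)
    rw [setConv_ind_eq_union_inter_add_sdiff A C]
    exact Nat.le_add_right _ _
  · have h1 := ih (C \ A).card (by omega) (A \ C) (C \ A) (t - (A ∩ C).card) (by omega)
      (by omega) rfl
    have h2 : ∑ z, setConv (ind (A ∪ C)) (A ∩ C) z = (A ∩ C).card * (A ∪ C).card := by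
      rw [sum_setConv, sum_ind]
    have h3 : ∀ z, setConv (ind (A ∪ C)) (A ∩ C) z
        + min (t - (A ∩ C).card) (setConv (ind (A \ C)) (C \ A) z) ≤ min t (setConv (ind A) C z) := by
      intro z
      have := setConv_ind_le (A ∪ C) (A ∩ C) z
      rw [setConv_ind_eq_union_inter_add_sdiff A C]
      omega
    have h4 := Finset.sum_le_sum fun z (_ : z ∈ Finset.univ) => h3 z
    rw [Finset.sum_add_distrib, h2] at h4
    refine le_trans ?_ ((Nat.add_le_add_left h1 _).trans h4)
    rw [min_eq_right (by omega)]
    obtain ⟨u, hu⟩ := Nat.exists_eq_add_of_lt hti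
    obtain ⟨v, hv⟩ := Nat.exists_eq_add_of_le (show t ≤ (A \ C).card + C.card by omega)
    have e1 : A.card + B.card - t = v + (A ∩ C).card := by omega
    have e2 : (A \ C).card + (C \ A).card - (t - (A ∩ C).card) = v := by omega
    have e3 : (A ∪ C).card = v + t := by omega
    have e4 : t - (A ∩ C).card = u + 1 := by omega
    rw [e2, e1, e3, e4, hu]
    apply le_of_eq
    ring

end Pollard

section Sorted

/-- The enumeration `0, 1, -1, 2, -2, …` of the integers. -/
def zigzag (i : ℕ) : ℤ := if i % 2 = 0 then -(i / 2) else (i + 1) / 2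

variable {p : ℕ}

/-- A function on `ZMod p` is zigzag-sorted if it is antitone along `0, 1, -1, 2, -2, …`. -/
def IsZigzagSorted (F : ZMod p → ℕ) : Prop :=
  ∀ i j, i ≤ j → j < p → F (zigzag j) ≤ F (zigzag i)

/-- Every sum of `n` values of `f` is at most the sum of the first `n` values of `F` along
`0, 1, -1, 2, -2, …`. -/
def IsDominated (f F : ZMod p → ℕ) : Prop :=
  ∀ B : Finset (ZMod p), ∑ x ∈ B, f x ≤ ∑ i ∈ Finset.range B.card, F (zigzag i)

theorem sum_le_sum_range_of_antitone {h : ℕ → ℕ} {n : ℕ}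
    (hh : ∀ i j, i ≤ j → j < n → h j ≤ h i) (S : Finset ℕ) (hS : ∀ i ∈ S, i < n) :
    ∑ i ∈ S, h i ≤ ∑ i ∈ Finset.range S.card, h i := by
  induction S using Finset.induction_on_max with
  | empty => simp
  | insert m S hm ih =>
    have hmS : m ∉ S := fun h => (hm m h).false
    rw [Finset.sum_insert hmS, Finset.card_insert_of_notMem hmS, Finset.sum_range_succ, add_comm]
    have hcard : S.card ≤ m := by
      simpa using Finset.card_le_card fun x hx => Finset.mem_range.mpr (hm x hx)
    exact add_le_add (ih fun i hi => hS i (Finset.mem_insert_of_mem hi))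
      (hh _ _ hcard (hS m (Finset.mem_insert_self _ _)))

theorem sum_mul_le_sum_mul_of_antitone {u v h : ℕ → ℕ} {n : ℕ}
    (hh : ∀ i j, i ≤ j → j < n → h j ≤ h i)
    (huv : ∀ m ≤ n, ∑ i ∈ Finset.range m, u i ≤ ∑ i ∈ Finset.range m, v i) :
    ∑ i ∈ Finset.range n, u i * h i ≤ ∑ i ∈ Finset.range n, v i * h i := by
  induction n generalizing h with
  | zero => simp
  | succ n ih =>
    have key : ∀ w : ℕ → ℕ, ∑ i ∈ Finset.range (n + 1), w i * h i =
        ∑ i ∈ Finset.range n, w i * (h i - h n) + (∑ i ∈ Finset.range (n + 1), w i) * h n := by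
      intro w
      rw [Finset.sum_range_succ, Finset.sum_range_succ, add_mul, Finset.sum_mul, ← add_assoc,
        ← Finset.sum_add_distrib]
      congr 1
      refine Finset.sum_congr rfl fun i hi => ?_
      rw [← mul_add, Nat.sub_add_cancel (hh i n (Finset.mem_range.mp hi).le n.lt_succ_self)]
    rw [key u, key v]
    refine add_le_add (ih (fun i j hij hj => ?_) fun m hm => huv m (by omega))
      (Nat.mul_le_mul_right _ (huv _ le_rfl))
    exact Nat.sub_le_sub_right (hh i j hij (by omega)) _

theorem zigzag_bijective [NeZero p] :
    Function.Bijective fun i : Fin p => ((zigzag i : ℤ) : ZMod p) := by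
  rw [Fintype.bijective_iff_injective_and_card, ZMod.card, Fintype.card_fin]
  refine ⟨fun i j hij => ?_, rfl⟩
  have hdvd := (ZMod.intCast_eq_intCast_iff_dvd_sub _ _ _).mp hij
  have hi := i.isLt
  have hj := j.isLt
  have h0 : zigzag j - zigzag i = 0 := by
    refine Int.eq_zero_of_abs_lt_dvd hdvd ?_
    rw [abs_lt]
    unfold zigzag
    split_ifs <;> omega
  unfold zigzag at h0
  ext
  split_ifs at h0 <;> omega

theorem exists_zigzag_eq [NeZero p] (x : ZMod p) : ∃ i < p, (zigzag i : ZMod p) = x := by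
  obtain ⟨i, hi⟩ := zigzag_bijective.2 x
  exact ⟨i, i.isLt, hi⟩

theorem sum_univ_eq_sum_zigzag [NeZero p] (f : ZMod p → ℕ) :
    ∑ x, f x = ∑ i ∈ Finset.range p, f (zigzag i) := by
  rw [Finset.sum_range]
  exact (zigzag_bijective.sum_comp f).symm

theorem IsZigzagSorted.isDominated_self [NeZero p] {F : ZMod p → ℕ} (hF : IsZigzagSorted F) :
    IsDominated F F := by
  intro B
  set S := (Finset.range p).filter fun i => (zigzag i : ZMod p) ∈ B with hS
  have hinj : Set.InjOn (fun i : ℕ => (zigzag i : ZMod p)) S := by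
    intro i hi j hj hij
    have hi' : i < p := by simp [hS] at hi; exact hi.1
    have hj' : j < p := by simp [hS] at hj; exact hj.1
    exact congrArg Fin.val (zigzag_bijective.1 (a₁ := ⟨i, hi'⟩) (a₂ := ⟨j, hj'⟩) hij)
  have hB : B = S.image fun i : ℕ => (zigzag i : ZMod p) := by
    ext x
    obtain ⟨i, hi, rfl⟩ := exists_zigzag_eq x
    simp only [hS, Finset.mem_image, Finset.mem_filter, Finset.mem_range]
    exact ⟨fun h => ⟨i, ⟨hi, h⟩, rfl⟩, fun ⟨j, hj, h⟩ => h ▸ hj.2⟩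
  have hcard : B.card = S.card := by rw [hB, Finset.card_image_of_injOn hinj]
  rw [hcard]
  nth_rewrite 1 [hB]
  rw [Finset.sum_image hinj]
  exact sum_le_sum_range_of_antitone hF S fun i hi => by simp [hS] at hi; exact hi.1

theorem IsZigzagSorted.monovary [NeZero p] {F G : ZMod p → ℕ} (hF : IsZigzagSorted F)
    (hG : IsZigzagSorted G) : Monovary F G := by
  intro x y hxy
  obtain ⟨i, hi, rfl⟩ := exists_zigzag_eq x
  obtain ⟨j, hj, rfl⟩ := exists_zigzag_eq y
  rcases le_total i j with h | h
  · exact absurd (hG i j h hj) (not_le.mpr hxy)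
  · exact hF j i h hi

theorem exists_perm_isZigzagSorted [NeZero p] (f : ZMod p → ℕ) :
    ∃ σ : Equiv.Perm (ZMod p), IsZigzagSorted (f ∘ σ) := by
  let E := Equiv.ofBijective _ (zigzag_bijective (p := p))
  let g : Fin p → ℕᵒᵈ := fun i => OrderDual.toDual (f (E i))
  refine ⟨E.symm.trans ((Tuple.sort g).trans E), fun i j hij hj => ?_⟩
  have hE : ∀ (i : ℕ) (hi : i < p), E.symm (zigzag i : ZMod p) = ⟨i, hi⟩ := fun i hi =>
    E.symm_apply_eq.mpr rfl
  have := Tuple.monotone_sort g (show (⟨i, by omega⟩ : Fin p) ≤ ⟨j, hj⟩ from hij)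
  simpa [hE i (by omega), hE j hj, g] using this

theorem IsDominated.sum_zigzag_le {f F : ZMod p → ℕ} [NeZero p] (h : IsDominated f F)
    (σ : Equiv.Perm (ZMod p)) {n : ℕ} (hn : n ≤ p) :
    ∑ i ∈ Finset.range n, (f ∘ σ) (zigzag i) ≤ ∑ i ∈ Finset.range n, F (zigzag i) := by
  have hinj : Set.InjOn (fun i : ℕ => σ (zigzag i : ZMod p)) (Finset.range n) := by
    intro i hi j hj hij
    have hi' : i < p := by simp at hi; omega
    have hj' : j < p := by simp at hj; omega
    exact congrArg Fin.val
      (zigzag_bijective.1 (a₁ := ⟨i, hi'⟩) (a₂ := ⟨j, hj'⟩) (σ.injective hij))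
  have := h ((Finset.range n).image fun i : ℕ => σ (zigzag i : ZMod p))
  rwa [Finset.sum_image hinj, Finset.card_image_of_injOn hinj, Finset.card_range] at this

theorem sum_mul_le_of_isDominated [NeZero p] {f g F G : ZMod p → ℕ} (hF : IsZigzagSorted F)
    (hf : IsDominated f F) (hg : IsDominated g G) :
    ∑ x, f x * g x ≤ ∑ x, F x * G x := by
  obtain ⟨σ, hσ⟩ := exists_perm_isZigzagSorted f
  obtain ⟨τ, hτ⟩ := exists_perm_isZigzagSorted g
  calc ∑ x, f x * g x = ∑ x, (f ∘ σ) x * (g ∘ τ) ((σ.trans τ.symm) x) := by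
        rw [← Equiv.sum_comp σ]
        simp
    _ ≤ ∑ x, (f ∘ σ) x * (g ∘ τ) x := (hσ.monovary hτ).sum_mul_comp_perm_le_sum_mul
    _ = ∑ i ∈ Finset.range p, (f ∘ σ) (zigzag i) * (g ∘ τ) (zigzag i) :=
        sum_univ_eq_sum_zigzag _
    _ ≤ ∑ i ∈ Finset.range p, F (zigzag i) * (g ∘ τ) (zigzag i) :=
        sum_mul_le_sum_mul_of_antitone hτ fun _ hm => hf.sum_zigzag_le σ hm
    _ = ∑ i ∈ Finset.range p, (g ∘ τ) (zigzag i) * F (zigzag i) := by simp only [mul_comm]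
    _ ≤ ∑ i ∈ Finset.range p, G (zigzag i) * F (zigzag i) :=
        sum_mul_le_sum_mul_of_antitone hF fun _ hm => hg.sum_zigzag_le τ hm
    _ = ∑ x, F x * G x := by
        rw [sum_univ_eq_sum_zigzag]
        simp only [mul_comm]

end Sorted

section Bell

variable {p : ℕ}

/-- A function on `ZMod p` is bell-shaped about `c / 2` if it is a decreasing function of the
distance to `c / 2`. -/
def IsBell (F : ZMod p → ℕ) (c : ℤ) : Prop :=
  ∀ i j : ℤ, |2 * i - c| ≤ |2 * j - c| → |2 * j - c| ≤ p → F j ≤ F i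

theorem IsBell.exists_isZigzagSorted {F : ZMod p → ℕ} {c : ℤ} (hF : IsBell F c) :
    ∃ s : ZMod p, IsZigzagSorted fun x => F (x + s) := by
  refine ⟨((c / 2 : ℤ) : ZMod p), fun i j hij hj => ?_⟩
  have := hF (zigzag i + c / 2) (zigzag j + c / 2) ?_ ?_
  · simpa using this
  all_goals
    simp only [abs_eq_max_neg]
    unfold zigzag
    split_ifs <;> omega

theorem isBell_ind_zero [NeZero p] : IsBell (ind ({0} : Finset (ZMod p))) 0 := by
  intro i j hij hj
  simp only [abs_eq_max_neg] at hij hj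
  unfold ind
  by_cases h : (j : ZMod p) = 0
  · have hj0 : j = 0 := by
      have := (ZMod.intCast_zmod_eq_zero_iff_dvd j p).mp h
      have hp := NeZero.pos p
      exact Int.eq_zero_of_abs_lt_dvd this (by rw [abs_eq_max_neg]; omega)
    have hi0 : i = 0 := by subst hj0; omega
    simp [hj0, hi0]
  · simp [h]

theorem IsBell.apply_sub [NeZero p] {F : ZMod p → ℕ} {c : ℤ} (hF : IsBell F c) (x : ZMod p) :
    F (c - x) = F x := by
  obtain ⟨j, rfl, hj⟩ : ∃ j : ℤ, (j : ZMod p) = x ∧ |2 * j - c| ≤ p := by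
    obtain ⟨y, rfl⟩ := ZMod.intCast_surjective x
    have hp : (0 : ℤ) < p := by exact_mod_cast NeZero.pos p
    refine ⟨(c - p + 1) / 2 + (y - (c - p + 1) / 2) % p, ?_, ?_⟩
    · simp
    · have h1 := Int.emod_nonneg (y - (c - p + 1) / 2) hp.ne'
      have h2 := Int.emod_lt_of_pos (y - (c - p + 1) / 2) hp
      rw [abs_eq_max_neg]
      omega
  have h : |2 * (c - j) - c| = |2 * j - c| := by
    rw [← abs_neg]
    ring_nf
  have h1 := hF (c - j) j h.le hj
  have h2 := hF j (c - j) h.ge (h.trans_le hj)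
  rw [Int.cast_sub] at h1 h2
  exact le_antisymm h2 h1

theorem IsBell.of_symm_of_step {F : ZMod p → ℕ} {c : ℤ} (hsymm : ∀ x : ZMod p, F (c - x) = F x)
    (hstep : ∀ i : ℤ, c ≤ 2 * i → 2 * i + 2 ≤ c + p → F (i + 1) ≤ F i) : IsBell F c := by
  have hright : ∀ i j : ℤ, c ≤ 2 * i → i ≤ j → 2 * j ≤ c + p → F j ≤ F i := by
    intro i j hi hij
    induction j, hij using Int.leInduction with
    | base => exact fun _ => le_rfl
    | succ j hij ih =>
      intro hj
      have := hstep j (by omega) (by omega)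
      rw [Int.cast_add, Int.cast_one]
      exact this.trans (ih (by omega))
  have hsymm' : ∀ i : ℤ, F ((c - i : ℤ) : ZMod p) = F i := fun i => by
    rw [Int.cast_sub, hsymm]
  intro i j hij hj
  simp only [abs_eq_max_neg] at hij hj
  rcases le_total c (2 * i) with hi' | hi' <;> rcases le_total c (2 * j) with hj' | hj'
  · exact hright i j hi' (by omega) (by omega)
  · rw [← hsymm' j]
    exact hright i _ hi' (by omega) (by omega)
  · rw [← hsymm' i]
    exact hright _ j (by omega) (by omega) (by omega)
  · rw [← hsymm' i, ← hsymm' j]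
    exact hright _ _ (by omega) (by omega) (by omega)

end Bell

section Interval

variable {p : ℕ}

theorem injOn_add_natCast (t : ZMod p) {a : ℕ} (ha : a ≤ p) :
    Set.InjOn (fun j : ℕ => t + (j : ZMod p)) (Finset.range a) := by
  intro i hi j hj hij
  simp only [Finset.coe_range, Set.mem_Iio] at hi hj
  have := (ZMod.natCast_eq_natCast_iff' i j p).mp (add_left_cancel hij)
  rwa [Nat.mod_eq_of_lt (by omega), Nat.mod_eq_of_lt (by omega)] at this

theorem card_interval (t : ZMod p) {a : ℕ} (ha : a ≤ p) : (interval t a).card = a := by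
  rw [interval, Finset.card_image_of_injOn (injOn_add_natCast t ha), Finset.card_range]

theorem sum_interval (f : ZMod p → ℕ) (t : ZMod p) {a : ℕ} (ha : a ≤ p) :
    ∑ x ∈ interval t a, f x = ∑ i ∈ Finset.range a, f (t + i) :=
  Finset.sum_image (injOn_add_natCast t ha)

theorem setConv_interval (f : ZMod p → ℕ) (t : ZMod p) {a : ℕ} (ha : a ≤ p) (z : ZMod p) :
    setConv f (interval t a) z = setConv f (interval 0 a) (z - t) := by
  unfold setConv
  rw [sum_interval _ _ ha, sum_interval _ _ ha]
  simp only [zero_add, sub_sub]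

theorem IsBell.setConv_interval [NeZero p] {F : ZMod p → ℕ} {c : ℤ} (hF : IsBell F c) {m : ℕ}
    (hm : m ≤ p) : IsBell (setConv F (interval 0 m)) (c + (m - 1)) := by
  have hconv : ∀ z, setConv F (interval 0 m) z = ∑ l ∈ Finset.range m, F (z - l) := fun z => by
    unfold setConv
    rw [sum_interval _ _ hm]
    simp only [zero_add]
  refine IsBell.of_symm_of_step (fun z => ?_) fun i hi hi' => ?_
  · rw [hconv, hconv, ← Finset.sum_range_reflect]
    refine Finset.sum_congr rfl fun l hl => ?_
    rw [← hF.apply_sub]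
    congr 1
    rw [Nat.cast_sub (by have := Finset.mem_range.mp hl; omega),
      Nat.cast_sub (by have := Finset.mem_range.mp hl; omega)]
    push_cast
    ring
  · rw [hconv, hconv]
    have h1 := Finset.sum_range_succ (fun l : ℕ => F ((i : ZMod p) + 1 - l)) m
    rw [Finset.sum_range_succ'] at h1
    have h2 : F ((i : ZMod p) + 1) ≤ F ((i : ZMod p) + 1 - m) := by
      rcases le_total (2 * (i + 1) - c) p with h | h
      · have := hF (i + 1 - m) (i + 1) (by simp only [abs_eq_max_neg]; omega)
          (by simp only [abs_eq_max_neg]; omega)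
        simpa using this
      · have := hF (i + 1 - m) (i + 1 - p) (by simp only [abs_eq_max_neg]; omega)
          (by simp only [abs_eq_max_neg]; omega)
        simpa using this
    simp only [Nat.cast_add, Nat.cast_one, add_sub_add_right_eq_sub, Nat.cast_zero, sub_zero] at h1
    omega

theorem card_filter_add_lt_or_le {m n t : ℕ} (htm : t ≤ m) (htn : t ≤ n) :
    ((Finset.range n ×ˢ Finset.range m).filter
      fun q => ¬ (t ≤ q.1 + q.2 ∧ q.1 + q.2 < m + n - t)).card ≤ t * t := by
  rw [← Finset.card_range t, ← Finset.card_product, Finset.card_range]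
  refine Finset.card_le_card_of_injOn
    (fun q => if q.1 + q.2 < t then q else (q.1 - (n - t), q.2 - (m - t))) ?_ ?_
  · rintro ⟨i, j⟩ h
    simp only [Finset.coe_filter, Finset.mem_product, Finset.mem_range, Set.mem_ofPred_eq] at h
    simp only [Finset.coe_product, Finset.coe_range, Set.mem_prod, Set.mem_Iio]
    split_ifs <;> simp <;> omega
  · rintro ⟨i, j⟩ h ⟨i', j'⟩ h' heq
    simp only [Finset.coe_filter, Finset.mem_product, Finset.mem_range, Set.mem_ofPred_eq] at h h'
    simp only at heq
    split_ifs at heq <;> simp only [Prod.mk.injEq] at heq ⊢ <;> omega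

theorem sum_min_setConv_interval_le [NeZero p] (u v : ZMod p) {m n t : ℕ} (hn : n ≤ p)
    (htm : t ≤ m) (htn : t ≤ n) :
    ∑ z, min t (setConv (ind (interval u m)) (interval v n) z) ≤ t * min p (m + n - t) := by
  rw [mul_min]
  refine le_min ?_ ?_
  · refine (Finset.sum_le_sum fun z _ => min_le_left t _).trans ?_
    simp [mul_comm]
  set K : Finset (ZMod p) := (Finset.Ico t (m + n - t)).image fun i : ℕ => u + v + i with hK
  have hKcard : K.card ≤ m + n - t - t := Finset.card_image_le.trans (by simp)
  have hind : ∀ z : ZMod p, ∀ j ∈ Finset.range n, ind (interval u m) (z - (v + j)) ≤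
      ∑ i ∈ Finset.range m, if z = u + v + ((j + i : ℕ) : ZMod p) then 1 else 0 := by
    intro z j _
    unfold ind
    split_ifs with h
    · obtain ⟨i, hi, hiz⟩ := Finset.mem_image.mp h
      have hz : z = u + v + ((j + i : ℕ) : ZMod p) := by
        rw [eq_sub_iff_add_eq] at hiz
        rw [← hiz]
        push_cast
        ring
      exact (if_pos hz).ge.trans (Finset.single_le_sum
        (f := fun i : ℕ => if z = u + v + ((j + i : ℕ) : ZMod p) then 1 else 0)
        (fun _ _ => Nat.zero_le _) hi)
    · exact Nat.zero_le _
  have hout : ∑ z ∈ Kᶜ, setConv (ind (interval u m)) (interval v n) z ≤ t * t := by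
    refine le_trans ?_ (card_filter_add_lt_or_le htm htn)
    calc ∑ z ∈ Kᶜ, setConv (ind (interval u m)) (interval v n) z
        ≤ ∑ z ∈ Kᶜ, ∑ j ∈ Finset.range n, ∑ i ∈ Finset.range m,
            if z = u + v + ((j + i : ℕ) : ZMod p) then 1 else 0 := by
          refine Finset.sum_le_sum fun z _ => ?_
          unfold setConv
          rw [sum_interval _ _ hn]
          exact Finset.sum_le_sum (hind z)
      _ = ∑ q ∈ Finset.range n ×ˢ Finset.range m,
            if u + v + ((q.1 + q.2 : ℕ) : ZMod p) ∈ Kᶜ then 1 else 0 := by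
          rw [Finset.sum_product, Finset.sum_comm]
          refine Finset.sum_congr rfl fun j _ => ?_
          rw [Finset.sum_comm]
          exact Finset.sum_congr rfl fun i _ => Finset.sum_ite_eq' _ _ _
      _ ≤ _ := by
          rw [← Finset.card_filter]
          refine Finset.card_le_card (Finset.monotone_filter_right _ fun q _ hq h => ?_)
          rw [Finset.mem_compl] at hq
          exact hq (Finset.mem_image.mpr ⟨q.1 + q.2, Finset.mem_Ico.mpr h, rfl⟩)
  rw [← Finset.sum_add_sum_compl K]
  calc _ ≤ ∑ z ∈ K, t + ∑ z ∈ Kᶜ, setConv (ind (interval u m)) (interval v n) z :=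
        add_le_add (Finset.sum_le_sum fun _ _ => min_le_left _ _)
          (Finset.sum_le_sum fun _ _ => min_le_right _ _)
    _ ≤ t * (m + n - t - t) + t * t := by
        rw [Finset.sum_const, smul_eq_mul, mul_comm]
        exact add_le_add (Nat.mul_le_mul_left _ hKcard) hout
    _ = t * (m + n - t) := by rw [← mul_add, Nat.sub_add_cancel (by omega)]

/-- Majorization form of Pollard's theorem. -/
theorem isDominated_setConv_ind [Fact p.Prime] (A B : Finset (ZMod p)) (u v s : ZMod p)
    (hG : IsZigzagSorted
      fun x => setConv (ind (interval u A.card)) (interval v B.card) (x + s)) :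
    IsDominated (setConv (ind A) B)
      fun x => setConv (ind (interval u A.card)) (interval v B.card) (x + s) := by
  intro S
  have hA : A.card ≤ p := (Finset.card_le_univ A).trans_eq (ZMod.card p)
  have hB : B.card ≤ p := (Finset.card_le_univ B).trans_eq (ZMod.card p)
  have hS : S.card ≤ p := (Finset.card_le_univ S).trans_eq (ZMod.card p)
  set r := setConv (ind A) B
  set g := setConv (ind (interval u A.card)) (interval v B.card) with hg
  have hshift : ∀ φ : ℕ → ℕ, ∑ x, φ (g (x + s)) = ∑ x, φ (g x) := fun φ =>
    Equiv.sum_comp (Equiv.addRight s) fun x => φ (g x)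
  have hrtot : ∑ x, r x = B.card * A.card := by rw [sum_setConv, sum_ind]
  have hgtot : ∑ x, g x = B.card * A.card := by
    rw [sum_setConv, sum_ind, card_interval _ hA, card_interval _ hB]
  rcases hS.eq_or_lt with hSp | hSp
  · rw [hSp, ← sum_univ_eq_sum_zigzag fun x => g (x + s), hshift fun y => y, hgtot, ← hrtot]
    exact Finset.sum_le_sum_of_subset (Finset.subset_univ _)
  set t := g (zigzag S.card + s) with ht
  have htB : t ≤ B.card := (setConv_ind_le _ _ _).trans (card_interval _ hB).le
  have htA : t ≤ A.card := by
    rw [ht, hg, setConv_ind_comm]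
    exact (setConv_ind_le _ _ _).trans (card_interval _ hA).le
  have hmin : ∑ x, min t (g (x + s)) ≤ ∑ x, min t (r x) := by
    rw [hshift]
    exact (sum_min_setConv_interval_le u v hB htA htB).trans (pollard A B t htA htB)
  have hsplit : ∀ f : ZMod p → ℕ, ∑ x, f x = ∑ x, min t (f x) + ∑ x, (f x - t) := fun f => by
    rw [← Finset.sum_add_distrib]
    exact Finset.sum_congr rfl fun x _ => by omega
  have hexcess : ∑ x, (r x - t) ≤ ∑ x, (g (x + s) - t) := by
    have h1 := hsplit r
    have h2 := hsplit fun x => g (x + s)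
    have h3 := hshift fun y => y
    beta_reduce at h2 h3
    omega
  have hzero : ∑ x, (g (x + s) - t) = ∑ i ∈ Finset.range S.card, (g (zigzag i + s) - t) := by
    rw [sum_univ_eq_sum_zigzag fun x => g (x + s) - t]
    symm
    refine Finset.sum_subset (Finset.range_mono hS) fun i hi hi' => ?_
    rw [Finset.mem_range] at hi hi'
    exact Nat.sub_eq_zero_of_le (hG S.card i (not_lt.mp hi') hi)
  calc ∑ x ∈ S, r x ≤ ∑ x ∈ S, (t + (r x - t)) := Finset.sum_le_sum fun x _ => by omega
    _ = S.card * t + ∑ x ∈ S, (r x - t) := by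
        rw [Finset.sum_add_distrib, Finset.sum_const, smul_eq_mul]
    _ ≤ S.card * t + ∑ i ∈ Finset.range S.card, (g (zigzag i + s) - t) := by
        refine Nat.add_le_add_left (le_trans ?_ (hexcess.trans hzero.le)) _
        exact Finset.sum_le_sum_of_subset (Finset.subset_univ _)
    _ = ∑ i ∈ Finset.range S.card, g (zigzag i + s) := by
        have hconst : S.card * t = ∑ _i ∈ Finset.range S.card, t := by simp
        rw [hconst, ← Finset.sum_add_distrib]
        refine Finset.sum_congr rfl fun i hi => ?_
        have := hG i S.card (Finset.mem_range.mp hi).le hSp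
        simp only at this
        omega

end Interval

section Representations

variable {p : ℕ}

/-- The number of representations of an element as a sum of `k` elements of `A`. -/
def repCount (k : ℕ) (A : Finset (ZMod p)) : ZMod p → ℕ :=
  match k with
  | 0 => ind {0}
  | k + 1 => setConv (repCount k A) A

theorem sum_piFinset_succ {k : ℕ} (A : Finset (ZMod p)) (f : (Fin (k + 1) → ZMod p) → ℕ) :
    ∑ x ∈ Fintype.piFinset (fun _ : Fin (k + 1) => A), f x =
      ∑ y ∈ A, ∑ x ∈ Fintype.piFinset (fun _ : Fin k => A), f (Fin.cons y x) := by
  rw [← Finset.sum_product']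
  symm
  refine Finset.sum_nbij' (fun q => Fin.cons q.1 q.2) (fun x => (x 0, Fin.tail x)) ?_ ?_ ?_ ?_ ?_
  · rintro ⟨y, x⟩ h
    rw [Finset.mem_product, Fintype.mem_piFinset] at h
    rw [Fintype.mem_piFinset]
    exact Fin.cases h.1 h.2
  · intro x h
    rw [Fintype.mem_piFinset] at h
    rw [Finset.mem_product, Fintype.mem_piFinset]
    exact ⟨h 0, fun i => h i.succ⟩
  · rintro ⟨y, x⟩ -
    simp
  · intro x _
    simp
  · rintro ⟨y, x⟩ -
    rfl

theorem repCount_eq_sum (k : ℕ) (A : Finset (ZMod p)) (z : ZMod p) :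
    repCount k A z =
      ∑ x ∈ Fintype.piFinset (fun _ : Fin k => A), if z = ∑ i, x i then 1 else 0 := by
  induction k generalizing z with
  | zero => simp [repCount, ind]
  | succ k ih =>
    rw [sum_piFinset_succ, repCount, setConv]
    refine Finset.sum_congr rfl fun y _ => ?_
    rw [ih]
    refine Finset.sum_congr rfl fun x _ => ?_
    rw [Fin.sum_univ_succ, Fin.cons_zero]
    simp only [Fin.cons_succ, sub_eq_iff_eq_add']

theorem skcount_eq_sum_repCount (k : ℕ) (A : Finset (ZMod p)) :
    skcount k A = ∑ z ∈ A, repCount k A z := by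
  unfold skcount
  rw [Finset.card_filter, sum_piFinset_succ]
  refine Finset.sum_congr rfl fun y _ => ?_
  rw [repCount_eq_sum]
  simp only [Fin.cons_zero, Fin.cons_succ]

theorem sum_repCount [NeZero p] (k : ℕ) (A : Finset (ZMod p)) :
    ∑ z, repCount k A z = A.card ^ k := by
  induction k with
  | zero => rw [repCount, sum_ind]; rfl
  | succ k ih => rw [repCount, sum_setConv, ih, pow_succ']

theorem repCount_interval (k : ℕ) (t : ZMod p) {a : ℕ} (ha : a ≤ p) (z : ZMod p) :
    repCount k (interval t a) z = repCount k (interval 0 a) (z - (k : ZMod p) * t) := by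
  induction k generalizing z with
  | zero => simp [repCount]
  | succ k ih =>
    rw [repCount, setConv_interval _ t ha, repCount]
    refine Finset.sum_congr rfl fun x _ => ?_
    rw [ih]
    congr 1
    push_cast
    ring

theorem isBell_repCount_interval [NeZero p] (k : ℕ) {a : ℕ} (ha : a ≤ p) :
    IsBell (repCount k (interval (0 : ZMod p) a)) (k * (a - 1)) := by
  induction k with
  | zero => simpa [repCount] using isBell_ind_zero
  | succ k ih =>
    have := ih.setConv_interval ha
    rw [show (k : ℤ) * (a - 1) + (a - 1) = (k + 1 : ℕ) * (a - 1) by push_cast; ring] at this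
    exact this

theorem sum_setConv_eq_sum_mul_setConv_neg [NeZero p] (f : ZMod p → ℕ) (A B : Finset (ZMod p)) :
    ∑ x ∈ B, setConv f A x = ∑ y, f y * setConv (ind B) (A.image (- ·)) y := by
  unfold setConv
  simp only [Finset.sum_image neg_injective.injOn, Finset.mul_sum, sub_neg_eq_add]
  rw [Finset.sum_comm, Finset.sum_comm (s := Finset.univ)]
  refine Finset.sum_congr rfl fun x _ => ?_
  rw [← sum_mul_ind, ← Equiv.sum_comp (Equiv.addRight x)]
  simp

theorem image_neg_interval [NeZero p] {a : ℕ} (ha : a ≤ p) :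
    (interval (0 : ZMod p) a).image (- ·) = interval (1 - (a : ZMod p)) a := by
  refine Finset.eq_of_subset_of_card_le (fun x hx => ?_) ?_
  · simp only [interval, Finset.mem_image, Finset.mem_range] at hx ⊢
    obtain ⟨y, ⟨j, hj, rfl⟩, rfl⟩ := hx
    refine ⟨a - 1 - j, by omega, ?_⟩
    rw [Nat.cast_sub (by omega), Nat.cast_sub (by omega)]
    push_cast
    ring
  · rw [Finset.card_image_of_injective _ neg_injective, card_interval _ ha, card_interval _ ha]

theorem compl_interval [NeZero p] (t : ZMod p) {a : ℕ} (ha : a ≤ p) :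
    (interval t a)ᶜ = interval (t + (a : ZMod p)) (p - a) := by
  refine (Finset.eq_of_subset_of_card_le (fun x hx => ?_) ?_).symm
  · rw [Finset.mem_compl]
    intro hx'
    simp only [interval, Finset.mem_image, Finset.mem_range] at hx hx'
    obtain ⟨i, hi, rfl⟩ := hx
    obtain ⟨j, hj, hij⟩ := hx'
    have := injOn_add_natCast t le_rfl (x₁ := j) (x₂ := a + i)
      (by simp; omega) (by simp; omega) (by simp [hij, add_assoc])
    omega
  · rw [Finset.card_compl, ZMod.card, card_interval _ ha, card_interval _ (Nat.sub_le _ _)]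

theorem sum_range_zigzag (f : ZMod p → ℕ) (n : ℕ) :
    ∑ i ∈ Finset.range n, f (zigzag i) =
      ∑ j ∈ Finset.range n, f (-(((n - 1) / 2 : ℕ) : ZMod p) + j) := by
  induction n with
  | zero => simp
  | succ n ih =>
    rw [Finset.sum_range_succ, ih]
    obtain ⟨l, rfl | rfl⟩ := Nat.even_or_odd' n
    · rcases l with _ | l
      · simp [zigzag]
      · rw [Finset.sum_range_succ', show (2 * (l + 1) - 1) / 2 = l by omega,
          show (2 * (l + 1) + 1 - 1) / 2 = l + 1 by omega,
          show zigzag (2 * (l + 1)) = -((l + 1 : ℕ) : ℤ) by unfold zigzag; split_ifs <;> omega]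
        push_cast
        congr 1
        · refine Finset.sum_congr rfl fun j _ => congrArg f ?_
          ring
        · rw [add_zero]
    · rw [Finset.sum_range_succ _ (2 * l + 1), show (2 * l + 1 - 1) / 2 = l by omega,
        show (2 * l + 1 + 1 - 1) / 2 = l by omega,
        show zigzag (2 * l + 1) = ((l + 1 : ℕ) : ℤ) by unfold zigzag; split_ifs <;> omega]
      push_cast
      congr 2
      ring

theorem sum_mul_setConv_interval_le [NeZero p] {F : ZMod p → ℕ} {a b : ℕ} (ha : a ≤ p) (hb : b ≤ p)
    (s u s' : ZMod p) (hF : IsZigzagSorted fun x => setConv F (interval 0 a) (x + s')) :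
    ∑ y, F (y + s) * setConv (ind (interval 0 b)) (interval (1 - (a : ZMod p)) a) (y + u) ≤
      ∑ i ∈ Finset.range b, setConv F (interval 0 a) (zigzag i + s') := by
  have hind : (fun x => ind (interval (0 : ZMod p) b) (x + u)) = ind (interval (-u) b) := by
    funext x
    simp only [ind, interval, Finset.mem_image, zero_add, neg_add_eq_iff_eq_add, add_comm u]
  have h1 : ∑ y, F (y + s) * setConv (ind (interval 0 b)) (interval (1 - (a : ZMod p)) a) (y + u) =
      ∑ x ∈ interval (-u) b, setConv F (interval 0 a) (x + s) := by
    simp only [← setConv_comp_add_right, hind, ← image_neg_interval ha]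
    rw [← sum_setConv_eq_sum_mul_setConv_neg fun y => F (y + s)]
  have h2 := hF.isDominated_self (interval (-u + s - s') b)
  rw [card_interval _ hb] at h2
  refine (h1.trans ?_).trans_le h2
  rw [sum_interval _ _ hb, sum_interval _ _ hb]
  refine Finset.sum_congr rfl fun j _ => congrArg _ ?_
  ring

/-- Among all sets of a given size, intervals have the most concentrated representation
function. -/
theorem exists_isDominated_repCount [Fact p.Prime] (k : ℕ) {a : ℕ} (ha : a ≤ p) :
    ∃ s : ZMod p, IsZigzagSorted (fun x => repCount k (interval 0 a) (x + s)) ∧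
      ∀ A : Finset (ZMod p), A.card = a →
        IsDominated (repCount k A) fun x => repCount k (interval 0 a) (x + s) := by
  induction k with
  | zero =>
    obtain ⟨s, hs⟩ := (isBell_repCount_interval 0 ha).exists_isZigzagSorted
    refine ⟨s, hs, fun A _ B => ?_⟩
    have h := hs.isDominated_self (B.image (· + -s))
    rw [Finset.card_image_of_injective _ (add_left_injective (-s)),
      Finset.sum_image (add_left_injective (-s)).injOn] at h
    simpa [repCount] using h
  | succ k ih =>
    obtain ⟨s, hs, hdom⟩ := ih
    obtain ⟨s', hs'⟩ := (isBell_repCount_interval (k + 1) ha).exists_isZigzagSorted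
    refine ⟨s', hs', fun A hA B => ?_⟩
    have hb : B.card ≤ p := (Finset.card_le_univ B).trans_eq (ZMod.card p)
    have hbell : IsBell (setConv (ind (interval (0 : ZMod p) B.card)) (interval 0 a))
        (0 + (B.card - 1) + (a - 1)) := by
      have h := (isBell_ind_zero (p := p)).setConv_interval hb
      have hδ : setConv (ind {0}) (interval (0 : ZMod p) B.card) =
          ind (interval (0 : ZMod p) B.card) := by
        funext z
        rw [setConv_ind_comm]
        simp [setConv]
      rw [hδ] at h
      exact h.setConv_interval ha
    obtain ⟨u, hu⟩ := hbell.exists_isZigzagSorted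
    have hsorted : IsZigzagSorted fun x : ZMod p =>
        setConv (ind (interval 0 B.card)) (interval (1 - (a : ZMod p)) a)
          (x + (u + (1 - (a : ZMod p)))) := by
      simpa only [setConv_interval _ (1 - (a : ZMod p)) ha, ← add_assoc, add_sub_cancel_right]
        using hu
    have hcard : (A.image (- ·)).card = a := by
      rw [Finset.card_image_of_injective _ neg_injective, hA]
    have hg := isDominated_setConv_ind B (A.image (- ·)) 0 (1 - (a : ZMod p))
      (u + (1 - (a : ZMod p)))
    rw [hcard] at hg
    calc ∑ x ∈ B, repCount (k + 1) A x
        = ∑ y, repCount k A y * setConv (ind B) (A.image (- ·)) y :=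
          sum_setConv_eq_sum_mul_setConv_neg _ _ _
      _ ≤ ∑ y, repCount k (interval 0 a) (y + s) *
            setConv (ind (interval 0 B.card)) (interval (1 - (a : ZMod p)) a)
              (y + (u + (1 - (a : ZMod p)))) :=
          sum_mul_le_of_isDominated hs (hdom A hA) (hg hsorted)
      _ ≤ _ := sum_mul_setConv_interval_le ha hb s _ s' hs'

end Representations

theorem stmt_6 (p : ℕ) (hp : p.Prime) (hp3 : 3 ≤ p) (k : ℕ) (hk : 2 ≤ k)
    (hk1 : ¬ k ≡ 1 [MOD p]) (a : ℕ) (ha : a ≤ p) :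
    ∃ t : ZMod p,
      ∀ A : Finset (ZMod p), A.card = a → skcount k (interval t a) ≤ skcount k A := by
  have : Fact p.Prime := ⟨hp⟩
  obtain ⟨s, -, hdom⟩ := exists_isDominated_repCount k ha
  have hk0 : (1 : ZMod p) - k ≠ 0 := by
    rw [sub_ne_zero]
    intro h
    exact hk1 ((ZMod.natCast_eq_natCast_iff k 1 p).mp (by rw [Nat.cast_one, h]))
  set v : ZMod p := -(((p - a - 1) / 2 : ℕ) : ZMod p)
  refine ⟨(v + s - a) / (1 - k), fun A hA => ?_⟩
  set t : ZMod p := (v + s - a) / (1 - k) with ht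
  have htk : t * (1 - k) = v + s - a := div_mul_cancel₀ _ hk0
  have hcompl : ∑ z ∈ Aᶜ, repCount k A z ≤
      ∑ z ∈ (interval t a)ᶜ, repCount k (interval t a) z := by
    refine (hdom A hA Aᶜ).trans_eq ?_
    rw [Finset.card_compl, ZMod.card, hA, compl_interval t ha,
      sum_interval _ _ (Nat.sub_le p a), sum_range_zigzag fun x => repCount k _ (x + s)]
    refine Finset.sum_congr rfl fun j _ => ?_
    rw [repCount_interval k t ha]
    congr 1
    linear_combination -htk
  have h1 := Finset.sum_add_sum_compl A (repCount k A)
  have h2 := Finset.sum_add_sum_compl (interval t a) (repCount k (interval t a))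
  rw [sum_repCount, hA] at h1
  rw [sum_repCount, card_interval t ha] at h2
  rw [skcount_eq_sum_repCount, skcount_eq_sum_repCount]
  omega
end

section
/- Let p ≥ 7 be prime and a ∈ [3,p-3]. If k ≡ 1 (mod p) is sufficiently large and at least one of a, k is odd, then s_k(a) < s_k(I) where I = {0,...,a-1}; in fact among all a-subsets of Z_p, arithmetic progressions maximize s_k. -/
/-- The interval `[a] = {0, 1, ..., a-1}` in `ZMod p`. -/
def initInterval (p a : ℕ) : Finset (ZMod p) :=
  (Finset.range a).image (fun j : ℕ => (j : ZMod p))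

/-- The progression `{x, x + d, ..., x + (a - 1) d}` in `ZMod p`. -/
def progression {p : ℕ} (a : ℕ) (x d : ZMod p) : Finset (ZMod p) :=
  (Finset.range a).image (fun j : ℕ => x + (j : ZMod p) * d)

/-- The exponential sum of `A` at the frequency `γ`. -/
noncomputable def expSum {p : ℕ} [NeZero p] (A : Finset (ZMod p)) (γ : ZMod p) : ℂ :=
  ∑ x ∈ A, ZMod.stdAddChar (γ * x)

section

open Finset ComplexConjugate

variable {p : ℕ} [hp : Fact p.Prime]

theorem injOn_progression {a : ℕ} (ha : a ≤ p) (x : ZMod p) {d : ZMod p} (hd : d ≠ 0) :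
    Set.InjOn (fun j : ℕ => x + (j : ZMod p) * d) (Finset.range a) := by
  intro i hi j hj h
  have h1 : (i : ZMod p) = j := mul_right_cancel₀ hd (add_left_cancel h)
  rw [ZMod.natCast_eq_natCast_iff'] at h1
  simp only [coe_range, Set.mem_Iio] at hi hj
  rwa [Nat.mod_eq_of_lt (by omega), Nat.mod_eq_of_lt (by omega)] at h1

theorem card_progression {a : ℕ} (ha : a ≤ p) (x : ZMod p) {d : ZMod p} (hd : d ≠ 0) :
    (progression a x d).card = a := by
  rw [progression, card_image_of_injOn (injOn_progression ha x hd), card_range]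

theorem image_affine_progression (a : ℕ) (x d t m : ZMod p) :
    (progression a x d).image (fun z => t + z * m) = progression a (t + x * m) (d * m) := by
  simp only [progression, image_image]
  congr 1
  funext j
  simp only [Function.comp]
  ring

theorem expSum_progression {a : ℕ} (ha : a ≤ p) (x : ZMod p) {d : ZMod p} (hd : d ≠ 0)
    (γ : ZMod p) :
    expSum (progression a x d) γ =
      ∑ j ∈ Finset.range a, ZMod.stdAddChar (γ * (x + (j : ZMod p) * d)) := by
  rw [expSum, progression, sum_image (injOn_progression ha x hd)]

theorem injective_affine (t : ZMod p) {m : ZMod p} (hm : m ≠ 0) :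
    Function.Injective (fun z : ZMod p => t + z * m) := fun _ _ h =>
  mul_right_cancel₀ hm (add_left_cancel h)

theorem expSum_image_affine (A : Finset (ZMod p)) (t : ZMod p) {m : ZMod p} (hm : m ≠ 0)
    (γ : ZMod p) :
    expSum (A.image (fun z => t + z * m)) γ = ZMod.stdAddChar (γ * t) * expSum A (γ * m) := by
  rw [expSum, sum_image (injective_affine t hm).injOn, expSum, mul_sum]
  refine sum_congr rfl fun z _ => ?_
  rw [← AddChar.map_add_eq_mul]
  ring_nf

theorem norm_expSum_image_affine (A : Finset (ZMod p)) (t : ZMod p) {m : ZMod p} (hm : m ≠ 0)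
    (γ : ZMod p) :
    ‖expSum (A.image (fun z => t + z * m)) γ‖ = ‖expSum A (γ * m)‖ := by
  rw [expSum_image_affine A t hm, norm_mul, AddChar.norm_apply, one_mul]

theorem conj_stdAddChar (x : ZMod p) :
    conj (ZMod.stdAddChar x : ℂ) = ZMod.stdAddChar (-x) := by
  rw [AddChar.map_neg_eq_conj]

theorem expSum_zero (A : Finset (ZMod p)) : expSum A 0 = A.card := by
  simp [expSum]

theorem stdAddChar_sum {ι : Type*} (s : Finset ι) (f : ι → ZMod p) :
    (ZMod.stdAddChar (∑ i ∈ s, f i) : ℂ) = ∏ i ∈ s, ZMod.stdAddChar (f i) := by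
  classical
  induction s using Finset.induction_on with
  | empty => simp
  | insert i s hi ih => rw [sum_insert hi, prod_insert hi, AddChar.map_add_eq_mul, ih]

/-- Solutions counted through the orthogonality of characters. -/
theorem card_mul_skcount (k : ℕ) (A : Finset (ZMod p)) :
    (p : ℂ) * skcount k A = ∑ γ, expSum A γ ^ k * conj (expSum A γ) := by
  have h1 : ∀ γ : ZMod p, expSum A γ ^ k * conj (expSum A γ) =
      ∑ x ∈ Fintype.piFinset (fun _ : Fin (k + 1) => A),
        ZMod.stdAddChar (γ * ((∑ i : Fin k, x i.succ) - x 0)) := by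
    intro γ
    have h2 := Finset.prod_univ_sum (fun _ : Fin (k + 1) => A)
      (fun i z => (ZMod.stdAddChar ((if i = 0 then -γ else γ) * z) : ℂ))
    rw [Fin.prod_univ_succ] at h2
    simp only [if_true, Fin.succ_ne_zero, if_false, prod_const, card_univ, Fintype.card_fin] at h2
    rw [expSum, map_sum, mul_comm]
    simp only [conj_stdAddChar]
    simp only [neg_mul] at h2
    rw [h2]
    refine sum_congr rfl fun x _ => ?_
    rw [Fin.prod_univ_succ]
    simp only [if_true, Fin.succ_ne_zero, if_false]
    rw [mul_sub, sub_eq_neg_add, AddChar.map_add_eq_mul, mul_sum, stdAddChar_sum]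
    simp
  simp only [h1]
  rw [sum_comm, skcount, card_filter]
  push_cast
  rw [mul_sum]
  refine sum_congr rfl fun x _ => ?_
  have h3 := AddChar.sum_mulShift (R := ZMod p) (R' := ℂ) ((∑ i : Fin k, x i.succ) - x 0)
    (ZMod.isPrimitive_stdAddChar p)
  rw [h3]
  simp only [sub_eq_zero, ZMod.card, eq_comm (a := x 0)]
  split_ifs <;> simp

theorem skcount_image_affine {k : ℕ} (hk : (k : ZMod p) = 1) (A : Finset (ZMod p)) (t : ZMod p)
    {m : ZMod p} (hm : m ≠ 0) :
    skcount k (A.image (fun z => t + z * m)) = skcount k A := by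
  symm
  have key : ∀ x : Fin (k + 1) → ZMod p,
      (t + x 0 * m = ∑ i : Fin k, (t + x i.succ * m)) ↔ x 0 = ∑ i : Fin k, x i.succ := by
    intro x
    rw [sum_add_distrib, ← sum_mul]
    simp only [sum_const, card_univ, Fintype.card_fin, nsmul_eq_mul, hk, one_mul]
    rw [add_right_inj]
    exact ⟨fun h => mul_right_cancel₀ hm h, fun h => by rw [h]⟩
  refine Finset.card_bij (fun x _ i => t + x i * m) ?_ ?_ ?_
  · intro x hx
    simp only [mem_filter, Fintype.mem_piFinset] at hx ⊢
    exact ⟨fun i => mem_image_of_mem (fun z => t + z * m) (hx.1 i), (key x).2 hx.2⟩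
  · intro x _ y _ h
    funext i
    exact injective_affine t hm (congrFun h i)
  · intro y hy
    simp only [mem_filter, Fintype.mem_piFinset, mem_image] at hy
    obtain ⟨h1, h2⟩ := hy
    choose x hx hxy using h1
    have : y = fun i => t + x i * m := funext fun i => (hxy i).symm
    subst this
    exact ⟨x, by simpa [Fintype.mem_piFinset] using ⟨hx, (key x).1 h2⟩, rfl⟩

/-- Exchanging a point of a set with extremal exponential sum for a point outside it strictly
decreases the component in the direction of the sum. -/
theorem re_lt_re_of_maximal {A : Finset (ZMod p)}
    (hA : ∀ B : Finset (ZMod p), B.card = A.card → ‖expSum B 1‖ ≤ ‖expSum A 1‖)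
    {w : ℂ} (hw : ‖w‖ = 1) (hwA : w * expSum A 1 = ‖expSum A 1‖)
    {x y : ZMod p} (hx : x ∈ A) (hy : y ∉ A) :
    (w * ZMod.stdAddChar y).re < (w * ZMod.stdAddChar x).re := by
  by_contra! hle
  set δ : ℂ := w * ZMod.stdAddChar y - w * ZMod.stdAddChar x with hδ
  have hδ0 : δ ≠ 0 := by
    rw [hδ, ← mul_sub]
    refine mul_ne_zero (by rintro rfl; simp at hw) (sub_ne_zero.2 fun h => ?_)
    exact hy (ZMod.injective_stdAddChar h ▸ hx)
  have hre : 0 ≤ δ.re := by rw [hδ, Complex.sub_re]; linarith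
  have hB := hA (insert y (A.erase x)) (by
    rw [card_insert_of_notMem (fun h => hy (mem_of_mem_erase h)), card_erase_add_one hx])
  have hS : w * expSum (insert y (A.erase x)) 1 = ‖expSum A 1‖ + δ := by
    rw [← hwA, expSum, sum_insert (fun h => hy (mem_of_mem_erase h)), expSum,
      ← add_sum_erase A _ hx, hδ]
    simp only [one_mul]
    ring
  have hn : ‖expSum (insert y (A.erase x)) 1‖ = ‖(‖expSum A 1‖ : ℂ) + δ‖ := by
    rw [← hS, norm_mul, hw, one_mul]
  rw [hn] at hB
  have hsq := pow_le_pow_left₀ (norm_nonneg _) hB 2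
  rw [← Complex.normSq_eq_norm_sq, Complex.normSq_apply] at hsq
  simp only [Complex.add_re, Complex.ofReal_re, Complex.add_im, Complex.ofReal_im] at hsq
  have hpos : 0 < Complex.normSq δ := Complex.normSq_pos.2 hδ0
  rw [Complex.normSq_apply] at hpos
  nlinarith [mul_nonneg (norm_nonneg (expSum A 1)) hre]

theorem exists_intCast_abs_sub_le (x : ZMod p) (t : ℝ) :
    ∃ n : ℤ, (n : ZMod p) = x ∧ |(n : ℝ) - t| ≤ p / 2 := by
  have hp0 : (0 : ℝ) < p := by exact_mod_cast hp.out.pos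
  refine ⟨x.val + p * round ((t - x.val) / p), by simp, ?_⟩
  have h := abs_sub_round ((t - x.val) / p)
  push_cast
  have e : (x.val : ℝ) + p * round ((t - x.val) / p) - t =
      -(p * ((t - x.val) / p - round ((t - x.val) / p))) := by
    field_simp
    ring
  rw [e, abs_neg, abs_mul, abs_of_pos hp0]
  nlinarith

/-- A set of residues cut out by a half-plane is an interval. -/
theorem eq_progression_of_re_lt_re {A : Finset (ZMod p)} (hA : A.card < p) {w : ℂ} (hw : ‖w‖ = 1)
    (h : ∀ x ∈ A, ∀ y ∉ A, (w * ZMod.stdAddChar y).re < (w * ZMod.stdAddChar x).re) :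
    ∃ x : ZMod p, A = progression A.card x 1 := by
  have hp0 : (0 : ℝ) < p := by exact_mod_cast hp.out.pos
  have hpi := Real.pi_pos
  obtain ⟨t, ht⟩ : ∃ t : ℝ, ∀ n : ℤ, (w * ZMod.stdAddChar (n : ZMod p)).re =
      Real.cos (2 * Real.pi / p * |(n : ℝ) - t|) := by
    refine ⟨-(w.arg * p / (2 * Real.pi)), fun n => ?_⟩
    have h1 : w = Complex.exp (w.arg * Complex.I) := by
      have := Complex.norm_mul_exp_arg_mul_I w
      rw [hw] at this
      simpa using this.symm
    rw [ZMod.stdAddChar_coe]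
    conv_lhs => rw [h1]
    rw [← Complex.exp_add]
    have h2 : (w.arg : ℂ) * Complex.I + 2 * Real.pi * Complex.I * n / p =
        ((w.arg + 2 * Real.pi * n / p : ℝ) : ℂ) * Complex.I := by
      push_cast
      ring
    have h3 : ∀ s : ℝ, Real.cos (2 * Real.pi / p * |s|) = Real.cos (2 * Real.pi / p * s) := by
      intro s
      rw [← Real.cos_abs (2 * Real.pi / p * s), abs_mul, abs_of_pos (show 0 < 2 * Real.pi / p by positivity)]
    rw [h2, h3, Complex.exp_ofReal_mul_I_re]
    congr 1
    field_simp
    ring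
  obtain ⟨y, hy, hymax⟩ := exists_max_image Aᶜ (fun y => (w * ZMod.stdAddChar y).re) (by
    rw [← card_pos, card_compl, ZMod.card]; omega)
  rw [mem_compl] at hy
  obtain ⟨m, hm, hmr⟩ := exists_intCast_abs_sub_le y t
  set r := |(m : ℝ) - t| with hr
  have scale : ∀ s : ℝ, s ≤ p / 2 → 2 * Real.pi / p * s ≤ Real.pi := by
    intro s hs
    calc 2 * Real.pi / p * s ≤ 2 * Real.pi / p * (p / 2) := by gcongr
      _ = Real.pi := by field_simp
  have hmem : ∀ n : ℤ, |(n : ℝ) - t| ≤ p / 2 → ((n : ZMod p) ∈ A ↔ |(n : ℝ) - t| < r) := by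
    intro n hn
    constructor
    · intro hnA
      have h1 := h _ hnA y hy
      by_contra! hle
      rw [← hm, ht, ht] at h1
      refine absurd h1 (not_lt.2 ?_)
      exact Real.cos_le_cos_of_nonneg_of_le_pi (by positivity) (scale _ hn) (by gcongr)
    · intro hlt
      by_contra hnA
      have h1 := hymax _ (mem_compl.2 hnA)
      rw [← hm, ht, ht] at h1
      refine absurd h1 (not_le.2 ?_)
      exact Real.cos_lt_cos_of_nonneg_of_le_pi (by positivity) (scale _ hmr) (by gcongr)
  set L : ℤ := ⌊t - r⌋ + 1 with hL
  set U : ℤ := ⌈t + r⌉ with hU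
  have hIco : ∀ n : ℤ, |(n : ℝ) - t| < r ↔ L ≤ n ∧ n < U := by
    intro n
    rw [hL, hU, Int.add_one_le_iff, Int.floor_lt, Int.lt_ceil, abs_lt]
    constructor <;> rintro ⟨h1, h2⟩ <;> constructor <;> linarith
  have hb : (U - L).toNat ≤ p := by
    by_contra! hlt
    have h1 := (hIco L).2 ⟨le_rfl, by omega⟩
    have h2 := (hIco (L + p)).2 ⟨by omega, by omega⟩
    push_cast at h2
    rw [abs_lt] at h1 h2
    linarith
  have hAeq : A = progression (U - L).toNat (L : ZMod p) 1 := by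
    ext x
    simp only [progression, mem_image, mem_range, mul_one]
    constructor
    · intro hx
      obtain ⟨n, rfl, hn⟩ := exists_intCast_abs_sub_le x t
      have h1 := (hIco n).1 ((hmem n hn).1 hx)
      refine ⟨(n - L).toNat, by omega, ?_⟩
      have h2 : (((n - L).toNat : ℤ) : ZMod p) = ((n - L : ℤ) : ZMod p) := by
        rw [Int.toNat_of_nonneg (by omega)]
      rw [Int.cast_natCast] at h2
      rw [h2]
      push_cast
      ring
    · rintro ⟨j, hj, rfl⟩
      have h1 := (hIco (L + j)).2 ⟨by omega, by omega⟩
      have h2 := (hmem (L + j) (by linarith)).2 h1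
      simpa using h2
  refine ⟨L, ?_⟩
  have hc := congrArg Finset.card hAeq
  rw [card_progression hb _ one_ne_zero] at hc
  rw [hc]
  exact hAeq

theorem exists_norm_one_mul_eq_norm (z : ℂ) : ∃ w : ℂ, ‖w‖ = 1 ∧ w * z = ‖z‖ := by
  refine ⟨Complex.exp (-(z.arg : ℂ) * Complex.I), ?_, ?_⟩
  · rw [← Complex.ofReal_neg, Complex.norm_exp_ofReal_mul_I]
  · conv_lhs => rw [← Complex.norm_mul_exp_arg_mul_I z]
    rw [mul_left_comm, ← Complex.exp_add]
    simp

theorem norm_expSum_progression_one (a : ℕ) (x : ZMod p) :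
    ‖expSum (progression a x 1) 1‖ = ‖expSum (progression a (0 : ZMod p) 1) 1‖ := by
  have h := image_affine_progression a (0 : ZMod p) 1 x 1
  rw [zero_mul, add_zero, one_mul] at h
  rw [← h, norm_expSum_image_affine _ _ one_ne_zero, one_mul]

theorem eq_progression_of_maximal {A : Finset (ZMod p)} (hlt : A.card < p)
    (hA : ∀ B : Finset (ZMod p), B.card = A.card → ‖expSum B 1‖ ≤ ‖expSum A 1‖) :
    ∃ x : ZMod p, A = progression A.card x 1 := by
  obtain ⟨w, hw, hwA⟩ := exists_norm_one_mul_eq_norm (expSum A 1)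
  exact eq_progression_of_re_lt_re hlt hw fun x hx y hy => re_lt_re_of_maximal hA hw hwA hx hy

theorem norm_expSum_one_le (A : Finset (ZMod p)) (hlt : A.card < p) :
    ‖expSum A 1‖ ≤ ‖expSum (progression A.card (0 : ZMod p) 1) 1‖ := by
  obtain ⟨B, hB, hmax⟩ := exists_max_image (powersetCard A.card (univ : Finset (ZMod p)))
    (fun B => ‖expSum B 1‖) ⟨A, by simp [mem_powersetCard]⟩
  simp only [mem_powersetCard, subset_univ, true_and] at hB hmax
  obtain ⟨x, hx⟩ := eq_progression_of_maximal (A := B) (by omega)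
    (fun C hC => hmax C (hC.trans hB))
  rw [← norm_expSum_progression_one _ x, ← hB, ← hx]
  exact hmax A rfl

theorem expSum_image_mul (A : Finset (ZMod p)) {γ : ZMod p} (hγ : γ ≠ 0) :
    expSum (A.image (fun z => 0 + z * γ)) 1 = expSum A γ := by
  rw [expSum_image_affine _ _ hγ]
  simp

theorem card_image_mul (A : Finset (ZMod p)) {γ : ZMod p} (hγ : γ ≠ 0) :
    (A.image (fun z => 0 + z * γ)).card = A.card :=
  card_image_of_injective _ (injective_affine 0 hγ)

theorem norm_expSum_le (A : Finset (ZMod p)) (hlt : A.card < p) {γ : ZMod p} (hγ : γ ≠ 0) :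
    ‖expSum A γ‖ ≤ ‖expSum (progression A.card (0 : ZMod p) 1) 1‖ := by
  have h := norm_expSum_one_le (A.image (fun z => 0 + z * γ)) (by rwa [card_image_mul A hγ])
  rwa [card_image_mul A hγ, expSum_image_mul A hγ] at h

theorem eq_progression_of_norm_expSum_eq (A : Finset (ZMod p)) (hlt : A.card < p) {γ : ZMod p}
    (hγ : γ ≠ 0) (h : ‖expSum A γ‖ = ‖expSum (progression A.card (0 : ZMod p) 1) 1‖) :
    ∃ x d : ZMod p, d ≠ 0 ∧ A = progression A.card x d := by
  obtain ⟨x, hx⟩ := eq_progression_of_maximal (A := A.image (fun z => 0 + z * γ))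
    (by rwa [card_image_mul A hγ]) (fun B hB => by
      rw [expSum_image_mul A hγ, h]
      rw [card_image_mul A hγ] at hB
      rw [← hB]
      exact norm_expSum_one_le B (by omega))
  rw [card_image_mul A hγ] at hx
  refine ⟨0 + x * γ⁻¹, 1 * γ⁻¹, by simpa using hγ, ?_⟩
  rw [← image_affine_progression, ← hx, image_image]
  have e : ((fun z => 0 + z * γ⁻¹) ∘ fun z : ZMod p => 0 + z * γ) = id := by
    funext z
    simp [hγ]
  rw [e, image_id]

/-- Exponential sums of a progression symmetric about the origin are real. -/
theorem exists_ofReal_eq_expSum {a : ℕ} (ha : a ≤ p) {c : ZMod p} (hc : 2 * c = (a : ZMod p) - 1)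
    (γ : ZMod p) : ∃ r : ℝ, expSum (progression a (-c) 1) γ = r := by
  rw [expSum_progression ha _ one_ne_zero]
  refine ⟨_, (Complex.conj_eq_iff_re.1 ?_).symm⟩
  rw [map_sum, ← sum_range_reflect]
  refine sum_congr rfl fun j hj => ?_
  rw [mem_range] at hj
  rw [conj_stdAddChar]
  congr 1
  rw [show a - 1 - j = a - (j + 1) by omega, Nat.cast_sub (by omega)]
  push_cast
  linear_combination γ * hc

theorem expSum_pos_of_zero_mem {A : Finset (ZMod p)} (hlt : A.card < p) (h0 : 0 ∈ A)
    (hA : ∀ B : Finset (ZMod p), B.card = A.card → ‖expSum B 1‖ ≤ ‖expSum A 1‖)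
    {r : ℝ} (hr : expSum A 1 = r) : 0 < r := by
  by_contra! hle
  obtain ⟨y, hy⟩ : ∃ y, y ∉ A := by
    by_contra! hall
    rw [eq_univ_iff_forall.2 hall, card_univ, ZMod.card] at hlt
    exact lt_irrefl _ hlt
  have h := re_lt_re_of_maximal hA (w := -1) (by simp)
    (by rw [hr, Complex.norm_real, Real.norm_of_nonpos hle]; simp) h0 hy
  rw [AddChar.map_zero_eq_one] at h
  have h1 := Complex.re_le_norm (ZMod.stdAddChar y : ℂ)
  rw [AddChar.norm_apply] at h1
  simp at h
  linarith

theorem choose_three_le_choose {n a : ℕ} (ha : 3 ≤ a) (ha' : a ≤ n - 3) :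
    n.choose 3 ≤ n.choose a := by
  have key : ∀ b, 3 ≤ b → b ≤ n / 2 → n.choose 3 ≤ n.choose b := by
    intro b hb
    induction b, hb using Nat.le_induction with
    | base => intro _; exact le_rfl
    | succ m hm ih =>
      intro h
      exact (ih (by omega)).trans (Nat.choose_le_succ_of_lt_half_left (by omega))
  by_cases h : a ≤ n / 2
  · exact key a ha h
  · rw [← Nat.choose_symm (show a ≤ n by omega)]
    exact key _ (by omega) (by omega)

theorem progression_reverse (a : ℕ) (x d : ZMod p) :
    progression a x d = progression a (x + ((a - 1 : ℕ) : ZMod p) * d) (-d) := by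
  have sub : ∀ y e : ZMod p,
      progression a y e ⊆ progression a (y + ((a - 1 : ℕ) : ZMod p) * e) (-e) := by
    intro y e z hz
    simp only [progression, mem_image, mem_range] at hz ⊢
    obtain ⟨j, hj, rfl⟩ := hz
    refine ⟨a - 1 - j, by omega, ?_⟩
    rw [Nat.cast_sub (show j ≤ a - 1 by omega)]
    ring
  refine (sub x d).antisymm ?_
  have h := sub (x + ((a - 1 : ℕ) : ZMod p) * d) (-d)
  rwa [neg_neg, mul_neg, add_neg_cancel_right] at h

theorem exists_card_eq_forall_ne_progression (hp7 : 7 ≤ p) {a : ℕ} (ha : 3 ≤ a)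
    (ha' : a ≤ p - 3) :
    ∃ A : Finset (ZMod p), A.card = a ∧ ∀ x d : ZMod p, d ≠ 0 → A ≠ progression a x d := by
  by_contra! hall
  have hsub : powersetCard a (univ : Finset (ZMod p)) ⊆
      ((univ : Finset (ZMod p)) ×ˢ Finset.Icc 1 (p / 2)).image
        (fun q => progression a q.1 (q.2 : ZMod p)) := by
    intro A hA
    simp only [mem_powersetCard, subset_univ, true_and] at hA
    obtain ⟨x, d, hd, rfl⟩ := hall A hA
    simp only [mem_image, mem_product, mem_univ, true_and, mem_Icc, Prod.exists]
    have hd0 : d.val ≠ 0 := by rwa [Ne, ZMod.val_eq_zero]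
    have hdp := ZMod.val_lt d
    by_cases h : d.val ≤ p / 2
    · exact ⟨x, d.val, ⟨by omega, h⟩, by rw [ZMod.natCast_zmod_val]⟩
    · refine ⟨x + ((a - 1 : ℕ) : ZMod p) * d, (-d).val, ?_, ?_⟩
      · have : NeZero d := ⟨hd⟩
        rw [ZMod.val_neg_of_ne_zero]
        omega
      · rw [ZMod.natCast_zmod_val, ← progression_reverse]
  have hcard := (card_le_card hsub).trans card_image_le
  rw [card_powersetCard, card_product, card_univ, ZMod.card, Nat.card_Icc] at hcard
  have h3 := (choose_three_le_choose ha ha').trans hcard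
  obtain ⟨m, rfl⟩ : ∃ m, p = 2 * m + 1 := hp.out.odd_of_ne_two (by omega)
  have e : (2 * m + 1) / 2 + 1 - 1 = m := by omega
  rw [e] at h3
  have h6 : (2 * m + 1).choose 3 * 6 = (2 * m + 1) * (2 * m) * (2 * m - 1) := by
    have := Nat.descFactorial_eq_factorial_mul_choose (2 * m + 1) 3
    simp only [Nat.descFactorial, Nat.factorial] at this
    have e1 : 2 * m + 1 - 1 = 2 * m := by omega
    have e2 : 2 * m + 1 - 2 = 2 * m - 1 := by omega
    simp only [e1, e2] at this
    change (2 * m - 1) * (2 * m * ((2 * m + 1) * 1)) = 6 * _ at this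
    rw [mul_comm _ 6, ← this]
    ring
  obtain ⟨l, rfl⟩ : ∃ l, m = l + 3 := ⟨m - 3, by omega⟩
  have e2 : 2 * (l + 3) - 1 = 2 * l + 5 := by omega
  rw [e2] at h6
  nlinarith

theorem eventually_forall_pow_lt {ι : Type*} [Finite ι] (f : ι → ℝ) (hf : ∀ i, 0 ≤ f i) (C M : ℝ) :
    ∀ᶠ k : ℕ in Filter.atTop, ∀ i, f i < M → C * f i ^ (k + 1) < M ^ (k + 1) := by
  rw [Filter.eventually_all]
  intro i
  by_cases h : f i < M
  · have hM : 0 < M := (hf i).trans_lt h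
    have h1 := tendsto_pow_atTop_nhds_zero_of_lt_one (div_nonneg (hf i) hM.le) ((div_lt_one hM).2 h)
    have h2 := ((Filter.tendsto_add_atTop_iff_nat 1).2 h1).const_mul C
    rw [mul_zero] at h2
    filter_upwards [h2.eventually (gt_mem_nhds one_pos)] with k hk _
    rw [div_pow, ← mul_div_assoc, div_lt_one (by positivity)] at hk
    exact hk
  · exact Filter.Eventually.of_forall fun k h' => absurd h' h

theorem card_mul_skcount_eq_sum_re (k : ℕ) (A : Finset (ZMod p)) :
    (p : ℝ) * skcount k A = ∑ γ, (expSum A γ ^ k * conj (expSum A γ)).re := by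
  have h := congrArg Complex.re (card_mul_skcount k A)
  rw [Complex.re_sum] at h
  rw [← h]
  norm_cast

theorem skcount_lt_skcount_of_expSum {k : ℕ} {A J : Finset (ZMod p)} (hcard : A.card = J.card)
    {M : ℝ} (hM : 0 < M) {r : ZMod p → ℝ} (hr : ∀ γ, expSum J γ = r γ)
    (hA : ∀ γ ≠ 0, 2 * p * ‖expSum A γ‖ ^ (k + 1) < M ^ (k + 1))
    (hJ : ∀ γ ≠ 0, r γ ^ (k + 1) = M ^ (k + 1) ∨ 2 * p * |r γ| ^ (k + 1) < M ^ (k + 1))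
    (hJ1 : r 1 ^ (k + 1) = M ^ (k + 1)) :
    skcount k A < skcount k J := by
  have hp0 : (0 : ℝ) < p := by exact_mod_cast hp.out.pos
  set ε : ℝ := M ^ (k + 1) / (2 * p) with hε
  have hε0 : 0 < ε := by positivity
  have hMε : M ^ (k + 1) = 2 * p * ε := by rw [hε]; field_simp
  have hre : ∀ γ, (expSum J γ ^ k * conj (expSum J γ)).re = r γ ^ (k + 1) := by
    intro γ
    rw [hr, Complex.conj_ofReal, ← pow_succ, ← Complex.ofReal_pow, Complex.ofReal_re]
  have hzero : (expSum A 0 ^ k * conj (expSum A 0)).re = r 0 ^ (k + 1) := by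
    rw [← hre, expSum_zero, expSum_zero, hcard]
  have hAle : ∀ γ ≠ 0, (expSum A γ ^ k * conj (expSum A γ)).re < ε := by
    intro γ hγ
    refine (Complex.re_le_norm _).trans_lt ?_
    rw [norm_mul, norm_pow, Complex.norm_conj, ← pow_succ]
    have := hA γ hγ
    rw [hMε] at this
    exact lt_of_mul_lt_mul_left this (by positivity)
  have hJge : ∀ γ ≠ 0, -ε < r γ ^ (k + 1) := by
    intro γ hγ
    rcases hJ γ hγ with h | h
    · rw [h]
      have : 0 < M ^ (k + 1) := by positivity
      linarith
    · rw [hMε, ← abs_pow] at h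
      have h1 := lt_of_mul_lt_mul_left h (by positivity)
      exact (abs_lt.1 h1).1
  have hsum : ∑ γ : ZMod p, (-2 * ε + if γ = 1 then 2 * p * ε else 0) <
      ∑ γ : ZMod p, (r γ ^ (k + 1) - (expSum A γ ^ k * conj (expSum A γ)).re) := by
    refine sum_lt_sum (fun γ _ => ?_) ⟨0, mem_univ _, ?_⟩
    · rcases eq_or_ne γ 0 with rfl | hγ
      · rw [hzero, if_neg zero_ne_one]
        linarith
      · have h1 := hAle γ hγ
        have h2 := hJge γ hγ
        split_ifs with h
        · subst h
          rw [hJ1, hMε]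
          linarith
        · linarith
    · rw [hzero, if_neg zero_ne_one]
      linarith
  rw [sum_add_distrib, sum_ite_eq' univ (1 : ZMod p), if_pos (mem_univ _), sum_const, card_univ,
    ZMod.card, nsmul_eq_mul, sum_sub_distrib, ← card_mul_skcount_eq_sum_re,
    ← sum_congr rfl (fun γ _ => hre γ), ← card_mul_skcount_eq_sum_re] at hsum
  have : (p : ℝ) * skcount k A < p * skcount k J := by linarith
  exact_mod_cast lt_of_mul_lt_mul_left this hp0.le

theorem skcount_progression {k : ℕ} (hk : (k : ZMod p) = 1) (a : ℕ) (x y : ZMod p) {d : ZMod p}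
    (hd : d ≠ 0) : skcount k (progression a x d) = skcount k (progression a y 1) := by
  have h := image_affine_progression a y 1 (x - y * d) d
  rw [sub_add_cancel, one_mul] at h
  rw [← h, skcount_image_affine hk _ _ hd]

/-- For large `k`, every set that is not a progression has fewer solutions than a progression of
the same size. -/
theorem eventually_skcount_lt_progression (hp2 : p ≠ 2) {a : ℕ} (ha0 : 0 < a) (ha : a < p) :
    ∀ᶠ k : ℕ in Filter.atTop, k ≡ 1 [MOD p] → (Odd a ∨ Odd k) →
      ∀ A : Finset (ZMod p), A.card = a → (∀ x d : ZMod p, d ≠ 0 → A ≠ progression a x d) →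
        ∀ x d : ZMod p, d ≠ 0 → skcount k A < skcount k (progression a x d) := by
  set M : ℝ := ‖expSum (progression a (0 : ZMod p) 1) 1‖ with hMdef
  filter_upwards [eventually_forall_pow_lt
    (fun q : Finset (ZMod p) × ZMod p => ‖expSum q.1 q.2‖) (fun _ => norm_nonneg _) (2 * p) M]
    with k hk hmod hodd A hA hnot x d hd
  have hk1 : (k : ZMod p) = 1 := by
    have := (ZMod.natCast_eq_natCast_iff k 1 p).2 hmod
    simpa using this
  have h2 : (2 : ZMod p) ≠ 0 := by
    intro h
    have h' : ((2 : ℕ) : ZMod p) = 0 := by exact_mod_cast h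
    rw [ZMod.natCast_eq_zero_iff] at h'
    exact hp2 ((Nat.prime_dvd_prime_iff_eq hp.out Nat.prime_two).1 h')
  obtain ⟨c, hc⟩ : ∃ c : ZMod p, 2 * c = (a : ZMod p) - 1 :=
    ⟨((a : ZMod p) - 1) / 2, by field_simp⟩
  have hJcard : (progression a (-c) 1).card = a := card_progression ha.le _ one_ne_zero
  choose r hr using fun γ => exists_ofReal_eq_expSum ha.le hc γ
  have hrnorm : ∀ γ, ‖expSum (progression a (-c) 1) γ‖ = |r γ| := fun γ => by
    rw [hr, Complex.norm_real, Real.norm_eq_abs]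
  have hAlt : ∀ γ ≠ 0, ‖expSum A γ‖ < M := by
    intro γ hγ
    have hle := norm_expSum_le A (hA ▸ ha) hγ
    rw [hA] at hle
    refine lt_of_le_of_ne hle fun heq => ?_
    obtain ⟨x, d, hd, h⟩ := eq_progression_of_norm_expSum_eq A (hA ▸ ha) hγ (by rw [hA]; exact heq)
    rw [hA] at h
    exact hnot x d hd h
  have hM : 0 < M := (norm_nonneg _).trans_lt (hAlt 1 one_ne_zero)
  have hpeak : ∀ γ ≠ 0, |r γ| = M → r γ ^ (k + 1) = M ^ (k + 1) := by
    intro γ hγ habs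
    rcases hodd with h | h
    · have h0 : (0 : ZMod p) ∈ progression a (-c) 1 := by
        obtain ⟨b, rfl⟩ := h
        have hcb : c = b := mul_left_cancel₀ h2 (by rw [hc]; push_cast; ring)
        simp only [progression, mem_image, mem_range]
        exact ⟨b, by omega, by rw [hcb]; ring⟩
      have hpos : 0 < r γ := by
        refine expSum_pos_of_zero_mem
          (A := (progression a (-c) 1).image (fun z => 0 + z * γ)) ?_ ?_ ?_ ?_
        · rwa [card_image_mul _ hγ, hJcard]
        · exact mem_image.2 ⟨0, h0, by ring⟩
        · intro B hB
          rw [card_image_mul _ hγ, hJcard] at hB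
          rw [expSum_image_mul _ hγ, hrnorm, habs, hMdef, ← hB]
          exact norm_expSum_one_le B (hB ▸ ha)
        · rw [expSum_image_mul _ hγ, hr]
      rw [← habs, abs_of_pos hpos]
    · rw [← habs, Even.pow_abs (Odd.add_one h)]
  rw [skcount_progression hk1 a x (-c) hd]
  refine skcount_lt_skcount_of_expSum (hA.trans hJcard.symm) hM hr
    (fun γ hγ => hk (A, γ) (hAlt γ hγ)) (fun γ hγ => ?_) ?_
  · have hle := norm_expSum_le (progression a (-c) 1) (hJcard.symm ▸ ha) hγ
    rw [hJcard] at hle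
    rcases hle.eq_or_lt with h | h
    · exact Or.inl (hpeak γ hγ ((hrnorm γ).symm.trans h))
    · refine Or.inr ?_
      rw [← hrnorm]
      exact hk (_, γ) h
  · exact hpeak 1 one_ne_zero ((hrnorm 1).symm.trans (norm_expSum_progression_one a _))

end

theorem stmt_16 (p : ℕ) (hp : p.Prime) (hp7 : 7 ≤ p)
    (a : ℕ) (ha : 3 ≤ a) (ha' : a ≤ p - 3) :
    ∃ k0 : ℕ, ∀ k : ℕ, k0 ≤ k → k ≡ 1 [MOD p] → (Odd a ∨ Odd k) →
      (∃ A : Finset (ZMod p), A.card = a ∧ skcount k A < skcount k (initInterval p a)) ∧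
      (∀ A : Finset (ZMod p), A.card = a → ∀ x d : ZMod p, d ≠ 0 →
        skcount k A ≤ skcount k ((Finset.range a).image (fun j : ℕ => x + (j : ZMod p) * d))) := by
  have : Fact p.Prime := ⟨hp⟩
  obtain ⟨k0, hk0⟩ := Filter.eventually_atTop.1
    (eventually_skcount_lt_progression (p := p) (by omega) (show 0 < a by omega) (by omega))
  refine ⟨k0, fun k hk hmod hodd => ⟨?_, fun A hA x d hd => ?_⟩⟩
  · obtain ⟨A, hA, hnot⟩ := exists_card_eq_forall_ne_progression hp7 ha ha'
    have h : initInterval p a = progression a 0 1 := by simp [initInterval, progression]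
    rw [h]
    exact ⟨A, hA, hk0 k hk hmod hodd A hA hnot 0 1 one_ne_zero⟩
  · change skcount k A ≤ skcount k (progression a x d)
    by_cases hnot : ∀ y e : ZMod p, e ≠ 0 → A ≠ progression a y e
    · exact (hk0 k hk hmod hodd A hA hnot x d hd).le
    · push Not at hnot
      obtain ⟨y, e, he, rfl⟩ := hnot
      have hk1 : (k : ZMod p) = 1 := by
        have := (ZMod.natCast_eq_natCast_iff k 1 p).2 hmod
        simpa using this
      rw [skcount_progression hk1 a y 0 he, skcount_progression hk1 a x 0 hd]
end
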